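/- arXiv:1002.4318 — 5 statements merged into one kernel-verified Lean document; each statement's English description precedes it below -/
import Mathlib

section
/- The set {a0, Δ, γ_0} is a homogeneous system of parameters for F[V]: the three polynomials are algebraically independent over F and F[V] is a finitely generated module over the subalgebra F[a0, Δ, γ_0]; equivalently, the only common zero of a0, Δ, γ_0 over an algebraic closure of F is the origin. -/
open MvPolynomial

/-- If `y² = d + e x` with `d, e` in the base ring, then `x` is integral as soon as the product
of the elements `x + 2 c y + c² e` over the image `c` of a finite ring is: the product is
invariant under `y ↦ -y`, so its square is a monic polynomial in `x` over the base ring. -/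
theorem isIntegral_of_isIntegral_prod_add {K A R : Type*} [CommRing K] [Fintype K] [CommRing A]
    [CommRing R] [Algebra A R] (f : K →+* A) (d e : A) {x y : R}
    (hy : y ^ 2 = algebraMap A R d + algebraMap A R e * x)
    (hprod : IsIntegral A (∏ c : K, (x + 2 * algebraMap A R (f c) * y +
      algebraMap A R (f c) ^ 2 * algebraMap A R e))) : IsIntegral A x := by
  nontriviality A
  let P : K → Polynomial A := fun c ↦
    (Polynomial.X + Polynomial.C (f c ^ 2 * e)) ^ 2 -
      Polynomial.C (4 * f c ^ 2) * (Polynomial.C d + Polynomial.C e * Polynomial.X)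
  have hquad (c : K) : (P c).Monic ∧ (P c).natDegree = 2 := by
    have hP : P c = Polynomial.X ^ 2 + (Polynomial.C (2 * f c ^ 2 * e - 4 * f c ^ 2 * e) *
        Polynomial.X + Polynomial.C ((f c ^ 2 * e) ^ 2 - 4 * f c ^ 2 * d)) := by
      simp only [P, map_sub, map_mul, map_pow, map_ofNat]
      ring
    have hdeg : (Polynomial.C (2 * f c ^ 2 * e - 4 * f c ^ 2 * e) * Polynomial.X +
        Polynomial.C ((f c ^ 2 * e) ^ 2 - 4 * f c ^ 2 * d)).degree < 2 :=
      Polynomial.degree_linear_lt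
    rw [hP]
    refine ⟨Polynomial.monic_X_pow_add (by exact_mod_cast hdeg), ?_⟩
    exact Polynomial.natDegree_eq_of_degree_eq_some <| by
      rw [Polynomial.degree_add_eq_left_of_degree_lt (by simpa using hdeg),
        Polynomial.degree_X_pow]
  refine IsIntegral.of_aeval_monic (p := ∏ c : K, P c)
    (Polynomial.monic_prod_of_monic _ _ fun c _ ↦ (hquad c).1) ?_ ?_
  · rw [Polynomial.natDegree_prod_of_monic _ _ fun c _ ↦ (hquad c).1]
    simp [hquad, Fintype.card_ne_zero]
  · have hneg : ∏ c : K, (x + 2 * algebraMap A R (f c) * y +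
        algebraMap A R (f c) ^ 2 * algebraMap A R e) =
        ∏ c : K, (x - 2 * algebraMap A R (f c) * y +
          algebraMap A R (f c) ^ 2 * algebraMap A R e) :=
      Fintype.prod_equiv (Equiv.neg K) _ _ fun c ↦ by simp
    convert hprod.mul hprod using 1
    nth_rewrite 2 [hneg]
    rw [map_prod, ← Finset.prod_mul_distrib]
    refine Finset.prod_congr rfl fun c _ ↦ ?_
    simp only [P, map_sub, map_add, map_mul, map_pow, map_ofNat, Polynomial.aeval_X,
      Polynomial.aeval_C]
    linear_combination 4 * algebraMap A R (f c) ^ 2 * hy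

/-- `{a0, Δ, γ₀}` is a homogeneous system of parameters for `F[V] = F[a0,a1,a2]`:
the three polynomials are algebraically independent over `F`, `F[V]` is a finite module over
`F[a0, Δ, γ₀]`, and their only common zero over an algebraic closure of `F` is the origin. -/
theorem hsop_for_P (F : Type*) [Field F] (p n q : ℕ) (hp : p.Prime) (hp2 : p ≠ 2)
    [CharP F p] (hn : n ≠ 0) (hq : q = p ^ n)
    (Fq : Type*) [Field Fq] [Fintype Fq] [Algebra Fq F] (hcard : Fintype.card Fq = q)
    (Δ γ₀ : MvPolynomial (Fin 3) F)
    (hΔ : Δ = X 1 ^ 2 - X 0 * X 2)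
    (hγ : γ₀ = ∏ c : Fq,
      (X 2 + C (2 * algebraMap Fq F c) * X 1 + C ((algebraMap Fq F c) ^ 2) * X 0)) :
    AlgebraicIndependent F ![(X 0 : MvPolynomial (Fin 3) F), Δ, γ₀] ∧
    Module.Finite (Algebra.adjoin F {(X 0 : MvPolynomial (Fin 3) F), Δ, γ₀})
      (MvPolynomial (Fin 3) F) ∧
    ∀ x : Fin 3 → AlgebraicClosure F,
      aeval x (X 0 : MvPolynomial (Fin 3) F) = 0 → aeval x Δ = 0 → aeval x γ₀ = 0 → x = 0 := by
  have hfin : Module.Finite (Algebra.adjoin F {(X 0 : MvPolynomial (Fin 3) F), Δ, γ₀})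
      (MvPolynomial (Fin 3) F) := by
    set A := Algebra.adjoin F {(X 0 : MvPolynomial (Fin 3) F), Δ, γ₀}
    have h0 : X 0 ∈ A := Algebra.subset_adjoin (by simp)
    have hΔA : Δ ∈ A := Algebra.subset_adjoin (by simp)
    have hγA : γ₀ ∈ A := Algebra.subset_adjoin (by simp)
    have hy : (X 1 : MvPolynomial (Fin 3) F) ^ 2 =
        algebraMap A _ ⟨Δ, hΔA⟩ + algebraMap A _ ⟨X 0, h0⟩ * X 2 := by
      change X 1 ^ 2 = Δ + X 0 * X 2
      rw [hΔ]
      ring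
    have hX2 : IsIntegral A (X 2 : MvPolynomial (Fin 3) F) := by
      refine isIntegral_of_isIntegral_prod_add ((algebraMap F A).comp (algebraMap Fq F))
        ⟨Δ, hΔA⟩ ⟨X 0, h0⟩ hy ?_
      suffices h : γ₀ = ∏ c : Fq, (X 2 + 2 * C (algebraMap Fq F c) * X 1 +
          C (algebraMap Fq F c) ^ 2 * X 0) from
        h ▸ isIntegral_algebraMap (R := A) (x := ⟨γ₀, hγA⟩)
      rw [hγ]
      refine Finset.prod_congr rfl fun c _ ↦ ?_
      rw [C_mul, C_pow, map_ofNat]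
    have hX1 : IsIntegral A (X 1 : MvPolynomial (Fin 3) F) :=
      .of_pow two_pos <| hy ▸ isIntegral_algebraMap.add (isIntegral_algebraMap.mul hX2)
    have : Algebra.IsIntegral A (MvPolynomial (Fin 3) F) := ⟨fun f ↦ by
      induction f using MvPolynomial.induction_on with
      | C a => exact isIntegral_algebraMap (R := A) (x := algebraMap F A a)
      | add f g hf hg => exact hf.add hg
      | mul_X f i hf =>
        refine hf.mul ?_
        fin_cases i
        · exact isIntegral_algebraMap (R := A) (x := ⟨X 0, h0⟩)
        · exact hX1
        · exact hX2⟩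
    have : Algebra.FiniteType A (MvPolynomial (Fin 3) F) := .of_restrictScalars_finiteType F _ _
    exact Algebra.IsIntegral.finite
  refine ⟨?_, hfin, fun x h0 h1 h2 ↦ ?_⟩
  · have hrange : Set.range ![(X 0 : MvPolynomial (Fin 3) F), Δ, γ₀] = {X 0, Δ, γ₀} := by
      ext
      simp
      tauto
    rw [← hrange] at hfin
    exact (Algebra.IsAlgebraic.isTranscendenceBasis_of_lift_le_trdeg_of_finite F _
      (by simp [MvPolynomial.trdeg_of_isDomain])).1
  · rw [aeval_X] at h0
    have hx1 : x 1 = 0 := by simpa [hΔ, h0] using h1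
    have hx2 : x 2 = 0 := by
      simpa [hγ, h0, hx1, map_prod, Finset.prod_const, Fintype.card_ne_zero] using h2
    funext i
    fin_cases i <;> assumption
end

section
/- The ring of P-invariants is generated by a0, Δ, β, γ_0; that is, F[V]^P = F[a0, Δ, β, γ_0]. -/
open MvPolynomial
open scoped Classical

/-- The algebra automorphism of `F[a0,a1,a2]` induced by the upper-triangular matrix `σ_c`:
`a0 ↦ a0`, `a1 ↦ a1 + c·a0`, `a2 ↦ a2 + 2c·a1 + c²·a0`.  Here `a_i = X i`. -/
noncomputable def σP (F : Type*) [Field F] (c : F) :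
    MvPolynomial (Fin 3) F →ₐ[F] MvPolynomial (Fin 3) F :=
  aeval ![X 0, X 1 + C c * X 0, X 2 + C (2 * c) * X 1 + C (c ^ 2) * X 0]

/-- The algebra automorphism of `F[a0,a1,a2]` induced by `τ`: `a0 ↦ a2`, `a1 ↦ -a1`, `a2 ↦ a0`. -/
noncomputable def τA (F : Type*) [Field F] :
    MvPolynomial (Fin 3) F →ₐ[F] MvPolynomial (Fin 3) F :=
  aeval ![X 2, -X 1, X 0]

/-- A polynomial over a domain that is invariant under the translations by a finite additive
group is a polynomial in the orbit product of the variable. -/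
lemma mem_adjoin_prod_of_comp_translate {S A : Type*} [CommRing S] [IsDomain S] [AddCommGroup A]
    [Fintype A] (ι : A →+ S) (hι : Function.Injective ι) (G : Polynomial S)
    (hG : ∀ c, G.comp (Polynomial.X + Polynomial.C (ι c)) = G) :
    G ∈ Algebra.adjoin S {∏ c : A, (Polynomial.X + Polynomial.C (ι c))} := by
  set b : Polynomial S := ∏ c : A, (Polynomial.X + Polynomial.C (ι c)) with hb
  have hbm : b.Monic := Polynomial.monic_prod_of_monic _ _ fun c _ => Polynomial.monic_X_add_C _
  have hbdeg : b.natDegree = Fintype.card A := by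
    rw [hb, Polynomial.natDegree_prod_of_monic _ _ fun c _ => Polynomial.monic_X_add_C _]
    simp
  have hcard : 0 < Fintype.card A := Fintype.card_pos
  have hbinv : ∀ c, b.comp (Polynomial.X + Polynomial.C (ι c)) = b := by
    intro c
    rw [hb, Polynomial.prod_comp]
    refine Fintype.prod_equiv (Equiv.addLeft c) _ _ fun d => ?_
    simp [add_assoc]
  induction hN : G.natDegree using Nat.strong_induction_on generalizing G with
  | _ N ih =>
  have hdiv : ∀ c, (G /ₘ b).comp (Polynomial.X + Polynomial.C (ι c)) = G /ₘ b ∧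
      (G %ₘ b).comp (Polynomial.X + Polynomial.C (ι c)) = G %ₘ b := by
    intro c
    have h := Polynomial.div_modByMonic_unique (f := G)
      ((G /ₘ b).comp (Polynomial.X + Polynomial.C (ι c)))
      ((G %ₘ b).comp (Polynomial.X + Polynomial.C (ι c))) hbm ⟨?_, ?_⟩
    · exact ⟨h.1.symm, h.2.symm⟩
    · conv_rhs => rw [← hG c, ← Polynomial.modByMonic_add_div G b]
      rw [Polynomial.add_comp, Polynomial.mul_comp, hbinv]
    · refine Polynomial.degree_lt_degree ?_
      rw [Polynomial.natDegree_comp, Polynomial.natDegree_X_add_C, mul_one]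
      refine Polynomial.natDegree_modByMonic_lt G hbm fun h => ?_
      rw [h, Polynomial.natDegree_one] at hbdeg
      omega
  have hr : G %ₘ b = Polynomial.C ((G %ₘ b).eval 0) := by
    refine sub_eq_zero.1 (Polynomial.eq_zero_of_natDegree_lt_card_of_eval_eq_zero _ hι ?_ ?_)
    · intro c
      have h := congrArg (Polynomial.eval 0) (hdiv c).2
      simpa [Polynomial.eval_comp, sub_eq_zero] using h
    · rw [Polynomial.natDegree_sub_C, ← hbdeg]
      refine Polynomial.natDegree_modByMonic_lt G hbm fun h => ?_
      rw [h, Polynomial.natDegree_one] at hbdeg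
      omega
  have hq : G /ₘ b ∈ Algebra.adjoin S {b} := by
    by_cases hlt : N < b.natDegree
    · have : G /ₘ b = 0 := (Polynomial.divByMonic_eq_zero_iff hbm).2
        (Polynomial.degree_lt_degree (hN ▸ hlt))
      rw [this]
      exact zero_mem _
    · refine ih _ ?_ _ (fun c => (hdiv c).1) rfl
      rw [Polynomial.natDegree_divByMonic _ hbm]
      omega
  rw [← Polynomial.modByMonic_add_div G b, hr]
  exact add_mem (Subalgebra.algebraMap_mem _ _)
    (mul_mem (Algebra.subset_adjoin rfl) hq)

lemma prod_add_mul_eq_pow_sub {k K : Type*} [Field k] [Fintype k] [Field K] (ι : k →+* K)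
    (x y : K) :
    ∏ c : k, (x + ι c * y) =
      x ^ Fintype.card k - y ^ (Fintype.card k - 1) * x := by
  have hq : 1 < Fintype.card k := Fintype.one_lt_card
  by_cases hy : y = 0
  · have : Fintype.card k - 1 ≠ 0 := by omega
    simp [hy, this]
  have h1 : ∀ z : K, ∏ c : k, (z + ι c) = z ^ Fintype.card k - z := by
    intro z
    have hdeg := FiniteField.X_pow_card_sub_X_natDegree_eq k hq
    have hmonic : (Polynomial.X ^ Fintype.card k - Polynomial.X : Polynomial k).Monic :=
      Polynomial.monic_X_pow_sub (by rw [Polynomial.degree_X]; exact_mod_cast hq)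
    have hprod := Polynomial.prod_multiset_X_sub_C_of_monic_of_roots_card_eq hmonic
      (by rw [FiniteField.roots_X_pow_card_sub_X, hdeg, Finset.card_val, Finset.card_univ])
    rw [FiniteField.roots_X_pow_card_sub_X] at hprod
    change ∏ c : k, (Polynomial.X - Polynomial.C c) = _ at hprod
    have h := congrArg (Polynomial.eval₂ ι z) hprod
    rw [Polynomial.eval₂_finsetProd] at h
    simp only [Polynomial.eval₂_sub, Polynomial.eval₂_X, Polynomial.eval₂_C,
      Polynomial.eval₂_X_pow] at h
    rw [← h]
    exact Fintype.prod_equiv (Equiv.neg k) _ _ fun c => by simp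
  have h2 : ∀ c : k, x + ι c * y = y * (x / y + ι c) := fun c => by field_simp
  simp_rw [h2]
  rw [Finset.prod_mul_distrib, h1, Finset.prod_const, Finset.card_univ]
  obtain ⟨m, hm⟩ : ∃ m, Fintype.card k = m + 1 := ⟨_, (Nat.sub_add_cancel hq.le).symm⟩
  rw [hm, Nat.add_sub_cancel, div_pow]
  field_simp
  ring

lemma prod_sq_sub_eq {k R : Type*} [Field k] [Fintype k] [CommRing R] [IsDomain R] (ι : k →+* R)
    {m : ℕ} (hm : Fintype.card k = 2 * m + 1) (x y z : R) :
    ∏ c : k, ((x + ι c * y) ^ 2 - z) =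
      (∏ c : k, (x + ι c * y)) ^ 2 - z ^ (2 * m + 1) + 2 * y ^ (2 * m) * z ^ (m + 1)
        - y ^ (4 * m) * z := by
  let j : R →+* AlgebraicClosure (FractionRing R) :=
    (algebraMap (FractionRing R) _).comp (algebraMap R (FractionRing R))
  have hj : Function.Injective j :=
    (algebraMap (FractionRing R) (AlgebraicClosure (FractionRing R))).injective.comp
      (IsFractionRing.injective R (FractionRing R))
  obtain ⟨δ, hδ⟩ := IsAlgClosed.exists_pow_nat_eq (j z) (n := 2) two_pos
  apply hj
  have hB := prod_add_mul_eq_pow_sub (j.comp ι)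
  have hadd : ∀ u v : AlgebraicClosure (FractionRing R),
      (u + v) ^ (2 * m + 1) = u ^ (2 * m + 1) + v ^ (2 * m + 1) := by
    obtain ⟨p, hchar, n, hp, hpn⟩ := FiniteField.card' k
    have := Fact.mk hp
    have := charP_of_injective_ringHom (j.comp ι).injective p
    intro u v
    rw [← hm, hpn]
    exact add_pow_char_pow _ _ _ _
  simp only [map_sub, map_add, map_mul, map_prod, map_pow, map_ofNat, ← hδ]
  have hfac : ∀ c : k, (j x + j (ι c) * j y) ^ 2 - δ ^ 2 =
      ((j x + δ) + (j.comp ι) c * j y) * ((j x + -δ) + (j.comp ι) c * j y) := by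
    intro c
    simp only [RingHom.comp_apply]
    ring
  have hBx := hB (j x) (j y)
  simp only [RingHom.comp_apply] at hBx
  rw [Finset.prod_congr rfl fun c _ => hfac c, Finset.prod_mul_distrib, hB, hB, hBx, hm,
    hadd, hadd, Odd.neg_pow ⟨m, rfl⟩, Nat.add_sub_cancel]
  ring

section

variable {F : Type*} [Field F]

lemma σP_X_zero (c : F) : σP F c (X 0) = X 0 := by simp [σP]

lemma σP_X_one (c : F) : σP F c (X 1) = X 1 + C c * X 0 := by simp [σP]

lemma σP_X_two (c : F) :
    σP F c (X 2) = X 2 + C (2 * c) * X 1 + C (c ^ 2) * X 0 := by simp [σP]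

lemma σP_disc (c : F) : σP F c (X 1 ^ 2 - X 0 * X 2) = X 1 ^ 2 - X 0 * X 2 := by
  simp only [map_sub, map_mul, map_pow, σP_X_zero, σP_X_one, σP_X_two, map_ofNat]
  ring

/-- The map `F[t, D][x] → F[a0, a1, a2]` with `t ↦ a0`, `D ↦ a1² - a0 a2`, `x ↦ a1`. -/
noncomputable def discHom (F : Type*) [Field F] :
    Polynomial (MvPolynomial (Fin 2) F) →+* MvPolynomial (Fin 3) F :=
  Polynomial.eval₂RingHom
    (aeval ![X 0, X 1 ^ 2 - X 0 * X 2] :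
      MvPolynomial (Fin 2) F →ₐ[F] MvPolynomial (Fin 3) F).toRingHom (X 1)

lemma discHom_X : discHom F Polynomial.X = X 1 := by simp [discHom]

lemma discHom_C_X_zero : discHom F (Polynomial.C (X 0)) = X 0 := by simp [discHom]

lemma discHom_C_X_one : discHom F (Polynomial.C (X 1)) = X 1 ^ 2 - X 0 * X 2 := by
  simp [discHom]

lemma discHom_C_C (a : F) : discHom F (Polynomial.C (C a)) = C a := by
  simp [discHom, MvPolynomial.algebraMap_eq]

lemma discHom_injective : Function.Injective (discHom F) := by
  let S := MvPolynomial (Fin 2) F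
  let K := FractionRing S
  let s : S →+* K := algebraMap S K
  have hs : Function.Injective s := IsFractionRing.injective S K
  have ht : s (X 0) ≠ 0 := (map_ne_zero_iff s hs).2 (X_ne_zero 0)
  let ψ : MvPolynomial (Fin 3) F →+* Polynomial K :=
    eval₂Hom (Polynomial.C.comp (s.comp C))
      ![Polynomial.C (s (X 0)), Polynomial.X,
        Polynomial.C (s (X 0))⁻¹ * (Polynomial.X ^ 2 - Polynomial.C (s (X 1)))]
  have hcomp : ψ.comp (discHom F) = Polynomial.mapRingHom s := by
    apply Polynomial.ringHom_ext'
    · apply MvPolynomial.ringHom_ext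
      · intro a
        simp [discHom_C_C, ψ]
      · intro i
        fin_cases i
        · simp [discHom_C_X_zero, ψ]
        · have : Polynomial.C (s (X 0)) * Polynomial.C (s (X 0))⁻¹ = 1 := by
            rw [← Polynomial.C_mul, mul_inv_cancel₀ ht, Polynomial.C_1]
          simp [discHom_C_X_one, ψ, ← mul_assoc, this]
    · simp [discHom_X, ψ]
  have hinj : Function.Injective (ψ.comp (discHom F)) := by
    rw [hcomp]
    exact Polynomial.map_injective s hs
  exact Function.Injective.of_comp (f := ψ) hinj

lemma σP_discHom (c : F) (G : Polynomial (MvPolynomial (Fin 2) F)) :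
    σP F c (discHom F G) =
      discHom F (G.comp (Polynomial.X + Polynomial.C (C c * X 0))) := by
  have h : (σP F c).toRingHom.comp (discHom F) = (discHom F).comp
      (Polynomial.compRingHom (Polynomial.X + Polynomial.C (C c * X 0))) := by
    apply Polynomial.ringHom_ext'
    · apply MvPolynomial.ringHom_ext
      · intro a
        simp [discHom_C_C]
      · intro i
        fin_cases i
        · simp [discHom_C_X_zero, σP_X_zero]
        · have := σP_disc c
          simpa [discHom_C_X_one] using this
    · simp [discHom_X, discHom_C_X_zero, discHom_C_C, σP_X_one]
  exact DFunLike.congr_fun h G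

lemma exists_pow_mul_eq_discHom (f : MvPolynomial (Fin 3) F) :
    ∃ k G, X 0 ^ k * f = discHom F G := by
  induction f using MvPolynomial.induction_on with
  | C a => exact ⟨0, Polynomial.C (C a), by rw [discHom_C_C, pow_zero, one_mul]⟩
  | add f g hf hg =>
    obtain ⟨k, G, hG⟩ := hf
    obtain ⟨l, H, hH⟩ := hg
    refine ⟨k + l, Polynomial.C (X 0) ^ l * G + Polynomial.C (X 0) ^ k * H, ?_⟩
    rw [map_add, map_mul, map_mul, map_pow, map_pow, discHom_C_X_zero, ← hG, ← hH]
    ring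
  | mul_X f i hf =>
    obtain ⟨k, G, hG⟩ := hf
    fin_cases i
    · refine ⟨k, G * Polynomial.C (X 0), ?_⟩
      rw [map_mul, discHom_C_X_zero, ← hG]
      simp [mul_assoc]
    · refine ⟨k, G * Polynomial.X, ?_⟩
      rw [map_mul, discHom_X, ← hG]
      simp [mul_assoc]
    · refine ⟨k + 1, G * (Polynomial.X ^ 2 - Polynomial.C (X 1)), ?_⟩
      rw [map_mul, map_sub, map_pow, discHom_X, discHom_C_X_one, ← hG]
      simp only [Fin.reduceFinMk]
      ring

/-- Up to a power of `a0`, every invariant is a polynomial in `a0`, `Δ` and `β`. -/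
lemma exists_pow_mul_mem_of_invariant {k : Type*} [Field k] [Fintype k] (ι : k →+* F)
    {f : MvPolynomial (Fin 3) F} (hf : ∀ c, σP F (ι c) f = f)
    (A : Subalgebra F (MvPolynomial (Fin 3) F)) (h0 : X 0 ∈ A) (hΔ : X 1 ^ 2 - X 0 * X 2 ∈ A)
    (hβ : ∏ c : k, (X 1 + C (ι c) * X 0) ∈ A) :
    ∃ m, X 0 ^ m * f ∈ A := by
  obtain ⟨m, G, hG⟩ := exists_pow_mul_eq_discHom f
  refine ⟨m, ?_⟩
  let ρ : k →+ MvPolynomial (Fin 2) F :=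
    (AddMonoidHom.mulRight (X 0)).comp ((C : F →+* MvPolynomial (Fin 2) F).comp ι).toAddMonoidHom
  have hρ : ∀ c, ρ c = C (ι c) * X 0 := fun c => rfl
  have hρi : Function.Injective ρ := by
    intro c d h
    rw [hρ, hρ] at h
    exact ι.injective (C_injective _ _ (mul_right_cancel₀ (X_ne_zero 0) h))
  have hmem := mem_adjoin_prod_of_comp_translate ρ hρi G fun c => by
    apply discHom_injective
    rw [hρ, ← σP_discHom, ← hG, map_mul, map_pow, σP_X_zero, hf]
  rw [hG]
  clear hG
  induction hmem using Algebra.adjoin_induction with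
  | mem x hx =>
    rw [Set.mem_singleton_iff.1 hx, map_prod]
    simpa [hρ, discHom_X, discHom_C_X_zero, discHom_C_C] using hβ
  | algebraMap r =>
    rw [Polynomial.algebraMap_apply, Algebra.algebraMap_self, RingHom.id_apply]
    induction r using MvPolynomial.induction_on with
    | C a =>
      rw [discHom_C_C]
      exact A.algebraMap_mem a
    | add p q hp hq =>
      rw [Polynomial.C_add, map_add]
      exact add_mem hp hq
    | mul_X p i hp =>
      rw [Polynomial.C_mul, map_mul]
      refine mul_mem hp ?_
      fin_cases i
      · simpa [discHom_C_X_zero] using h0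
      · simpa [discHom_C_X_one] using hΔ
  | add x y _ _ hx hy =>
    rw [map_add]
    exact add_mem hx hy
  | mul x y _ _ hx hy =>
    rw [map_mul]
    exact mul_mem hx hy

/-- Reduction modulo `a0`, with `F[a1, a2]` viewed as `F[a1][a2]`. -/
noncomputable def reduceHom (F : Type*) [Field F] :
    MvPolynomial (Fin 3) F →ₐ[F] Polynomial (Polynomial F) :=
  aeval ![0, Polynomial.C Polynomial.X, Polynomial.X]

/-- The polynomials `r(Δ, γ)` and `s(Δ, γ) β` are linearly independent modulo `a0`. -/
lemma eq_zero_of_reduceHom_eq_zero {k : Type*} [Field k] [Fintype k] (ι : k →+* F)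
    (h2 : (2 : F) ≠ 0) (hodd : Odd (Fintype.card k)) {Δ β γ : MvPolynomial (Fin 3) F}
    (hΔ : Δ = X 1 ^ 2 - X 0 * X 2)
    (hβ : β = ∏ c : k, (X 1 + C (ι c) * X 0))
    (hγ : γ = ∏ c : k, (X 2 + C (2 * ι c) * X 1 + C (ι c ^ 2) * X 0))
    {r s : Polynomial (Polynomial F)}
    (hrs : reduceHom F (r.eval₂ (Polynomial.aeval Δ).toRingHom γ +
      s.eval₂ (Polynomial.aeval Δ).toRingHom γ * β) = 0) :
    r = 0 ∧ s = 0 := by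
  let x : Polynomial (Polynomial F) := Polynomial.C Polynomial.X
  let g : Polynomial (Polynomial F) :=
    ∏ c : k, (Polynomial.X + Polynomial.C (Polynomial.C (2 * ι c) * Polynomial.X))
  let e : Polynomial F →+* Polynomial F := (Polynomial.expand F 2).toRingHom
  have hΔ' : reduceHom F Δ = x ^ 2 := by simp [hΔ, reduceHom, x]
  have hβ' : reduceHom F β = x ^ Fintype.card k := by
    simp [hβ, reduceHom, x]
  have hγ' : reduceHom F γ = g := by
    rw [hγ, map_prod]
    refine Finset.prod_congr rfl fun c _ => ?_
    simp [reduceHom, Polynomial.algebraMap_apply, mul_assoc]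
  have hgm : ∀ c : k, (Polynomial.X + Polynomial.C (Polynomial.C (2 * ι c) * Polynomial.X) :
      Polynomial (Polynomial F)).Monic := fun c => Polynomial.monic_X_add_C _
  have hgdeg : g.natDegree = Fintype.card k := by
    rw [Polynomial.natDegree_prod_of_monic _ _ fun c _ => hgm c]
    simp only [Polynomial.natDegree_X_add_C, Finset.sum_const, Finset.card_univ, smul_eq_mul,
      mul_one]
  have heval : ∀ t : Polynomial (Polynomial F),
      reduceHom F (t.eval₂ (Polynomial.aeval Δ).toRingHom γ) = (t.map e).comp g := by
    intro t
    have h : (reduceHom F).toRingHom.comp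
        (Polynomial.eval₂RingHom (Polynomial.aeval Δ).toRingHom γ) =
        (Polynomial.compRingHom g).comp (Polynomial.mapRingHom e) := by
      apply Polynomial.ringHom_ext'
      · apply Polynomial.ringHom_ext'
        · ext1 a
          simp [e, Polynomial.algebraMap_apply]
        · simp [hΔ', x, e]
      · simp [hγ']
    exact DFunLike.congr_fun h t
  have hinj : ∀ t : Polynomial (Polynomial F), (t.map e).comp g = 0 → t = 0 := by
    intro t ht
    rcases Polynomial.comp_eq_zero_iff.1 ht with h | h
    · exact (Polynomial.map_eq_zero_iff (Polynomial.expand_injective two_pos)).1 h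
    · have := congrArg Polynomial.natDegree h.2
      rw [hgdeg, Polynomial.natDegree_C] at this
      exact absurd this Fintype.card_ne_zero
  let ν : Polynomial (Polynomial F) →+* Polynomial (Polynomial F) :=
    Polynomial.mapRingHom (Polynomial.compRingHom (-Polynomial.X))
  have hνx : ν x = -x := by simp [ν, x]
  have hνg : ν g = g := by
    rw [map_prod]
    refine Fintype.prod_equiv (Equiv.neg k) _ _ fun c => ?_
    simp only [ν, Polynomial.coe_mapRingHom, Polynomial.map_add, Polynomial.map_X,
      Polynomial.map_C, Polynomial.coe_compRingHom_apply, Polynomial.mul_comp,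
      Polynomial.C_comp, Polynomial.X_comp, Equiv.neg_apply, map_neg, mul_neg, neg_mul]
  have hνt : ∀ t : Polynomial (Polynomial F), ν ((t.map e).comp g) = (t.map e).comp g := by
    intro t
    have h : (ν.comp (Polynomial.compRingHom g)).comp (Polynomial.mapRingHom e) =
        (Polynomial.compRingHom g).comp (Polynomial.mapRingHom e) := by
      apply Polynomial.ringHom_ext'
      · apply Polynomial.ringHom_ext'
        · ext1 a
          simp [e, ν]
        · simp [e, ν]
          ring
      · simp [hνg]
    exact DFunLike.congr_fun h t
  rw [map_add, map_mul, heval, heval, hβ'] at hrs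
  have hneg : (-x) ^ Fintype.card k = -x ^ Fintype.card k := hodd.neg_pow x
  have hν := congrArg ν hrs
  rw [map_add, map_mul, map_pow, hνt, hνt, hνx, hneg, map_zero] at hν
  have h2' : (2 : Polynomial (Polynomial F)) ≠ 0 := by
    have h := (map_ne_zero_iff (algebraMap F (Polynomial (Polynomial F)))
      (FaithfulSMul.algebraMap_injective _ _)).2 h2
    rwa [map_ofNat] at h
  have hx : x ^ Fintype.card k ≠ 0 :=
    pow_ne_zero _ (Polynomial.C_ne_zero.2 Polynomial.X_ne_zero)
  constructor
  · apply hinj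
    refine (mul_eq_zero.1 ?_).resolve_left h2'
    linear_combination hrs + hν
  · apply hinj
    refine (mul_eq_zero.1 ?_).resolve_right (mul_ne_zero h2' hx)
    linear_combination hrs - hν

lemma X_zero_pow_mul_prod {k : Type*} [Field k] [Fintype k] (ι : k →+* F) :
    (X 0 : MvPolynomial (Fin 3) F) ^ Fintype.card k *
      ∏ c : k, (X 2 + C (2 * ι c) * X 1 + C (ι c ^ 2) * X 0) =
      ∏ c : k, ((X 1 + C (ι c) * X 0) ^ 2 - (X 1 ^ 2 - X 0 * X 2)) := by
  rw [← Finset.card_univ, ← Finset.prod_const, ← Finset.prod_mul_distrib]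
  refine Finset.prod_congr rfl fun c _ => ?_
  simp only [map_mul, map_pow, map_ofNat]
  ring

lemma exists_sq_eq_add_X_zero_mul {k : Type*} [Field k] [Fintype k] (ι : k →+* F)
    (hodd : Odd (Fintype.card k)) {Δ β γ : MvPolynomial (Fin 3) F}
    (hΔ : Δ = X 1 ^ 2 - X 0 * X 2)
    (hβ : β = ∏ c : k, (X 1 + C (ι c) * X 0))
    (hγ : γ = ∏ c : k, (X 2 + C (2 * ι c) * X 1 + C (ι c ^ 2) * X 0)) :
    ∃ h ∈ Algebra.adjoin F {X 0, Δ, β, γ}, β ^ 2 = Δ ^ Fintype.card k + X 0 * h := by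
  have h0 : X 0 ∈ Algebra.adjoin F {X 0, Δ, β, γ} := Algebra.subset_adjoin (by simp)
  have h1 : Δ ∈ Algebra.adjoin F {X 0, Δ, β, γ} := Algebra.subset_adjoin (by simp)
  have h3 : γ ∈ Algebra.adjoin F {X 0, Δ, β, γ} := Algebra.subset_adjoin (by simp)
  obtain ⟨m, hm⟩ := hodd
  have hcard : 1 < Fintype.card k := Fintype.one_lt_card
  obtain ⟨l, rfl⟩ : ∃ l, m = l + 1 := ⟨m - 1, by omega⟩
  have hrel := X_zero_pow_mul_prod ι
  have hexp := prod_sq_sub_eq ((C : F →+* MvPolynomial (Fin 3) F).comp ι) hm (X 1) (X 0) Δ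
  simp only [RingHom.comp_apply] at hexp
  rw [← hγ, ← hΔ, hexp, ← hβ, hm] at hrel
  refine ⟨X 0 ^ (2 * (l + 1)) * γ - 2 * X 0 ^ (2 * l + 1) * Δ ^ (l + 1 + 1)
    + X 0 ^ (4 * l + 3) * Δ, ?_, ?_⟩
  · exact add_mem (sub_mem (mul_mem (pow_mem h0 _) h3)
      (mul_mem (mul_mem (ofNat_mem _ 2) (pow_mem h0 _)) (pow_mem h1 _)))
      (mul_mem (pow_mem h0 _) h1)
  · rw [hm]
    linear_combination -hrel

/-- Modulo `a0`, every element of `F[a0, Δ, β, γ]` has the form `r(Δ, γ) + s(Δ, γ) β`. -/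
lemma exists_eq_X_zero_mul_add {N : ℕ} {Δ β γ h : MvPolynomial (Fin 3) F}
    (hh : h ∈ Algebra.adjoin F {X 0, Δ, β, γ}) (hβ : β ^ 2 = Δ ^ N + X 0 * h)
    {f : MvPolynomial (Fin 3) F} (hf : f ∈ Algebra.adjoin F {X 0, Δ, β, γ}) :
    ∃ f' ∈ Algebra.adjoin F {X 0, Δ, β, γ}, ∃ r s : Polynomial (Polynomial F),
      f = X 0 * f' + (r.eval₂ (Polynomial.aeval Δ).toRingHom γ +
        s.eval₂ (Polynomial.aeval Δ).toRingHom γ * β) := by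
  have h2 : β ∈ Algebra.adjoin F {X 0, Δ, β, γ} := Algebra.subset_adjoin (by simp)
  have h3 : γ ∈ Algebra.adjoin F {X 0, Δ, β, γ} := Algebra.subset_adjoin (by simp)
  have hmem : ∀ t : Polynomial (Polynomial F),
      t.eval₂ (Polynomial.aeval Δ).toRingHom γ ∈ Algebra.adjoin F {X 0, Δ, β, γ} := by
    intro t
    rw [Polynomial.eval₂_eq_sum]
    refine sum_mem fun i _ => mul_mem ?_ (pow_mem h3 i)
    exact Algebra.adjoin_mono (by simp) (Polynomial.aeval_mem_adjoin_singleton F Δ)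
  induction hf using Algebra.adjoin_induction with
  | mem x hx =>
    rcases hx with rfl | rfl | rfl | rfl
    · exact ⟨1, one_mem _, 0, 0, by simp⟩
    · exact ⟨0, zero_mem _, Polynomial.C Polynomial.X, 0, by simp⟩
    · exact ⟨0, zero_mem _, 0, 1, by simp⟩
    · exact ⟨0, zero_mem _, Polynomial.X, 0, by simp⟩
  | algebraMap a =>
    exact ⟨0, zero_mem _, Polynomial.C (Polynomial.C a), 0, by simp⟩
  | add x y _ _ hx hy =>
    obtain ⟨x', hx', r, s, rfl⟩ := hx
    obtain ⟨y', hy', r', s', rfl⟩ := hy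
    refine ⟨x' + y', add_mem hx' hy', r + r', s + s', ?_⟩
    rw [Polynomial.eval₂_add, Polynomial.eval₂_add]
    ring
  | mul x y _ hyA hx hy =>
    obtain ⟨x', hx', r, s, rfl⟩ := hx
    obtain ⟨y', hy', r', s', rfl⟩ := hy
    have hΔN : (Polynomial.C (Polynomial.X ^ N) : Polynomial (Polynomial F)).eval₂
        (Polynomial.aeval Δ).toRingHom γ = Δ ^ N := by
      rw [Polynomial.eval₂_C]
      simp
    refine ⟨x' * (X 0 * y' + (r'.eval₂ (Polynomial.aeval Δ).toRingHom γ +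
        s'.eval₂ (Polynomial.aeval Δ).toRingHom γ * β)) +
        (r.eval₂ (Polynomial.aeval Δ).toRingHom γ +
          s.eval₂ (Polynomial.aeval Δ).toRingHom γ * β) * y' +
        s.eval₂ (Polynomial.aeval Δ).toRingHom γ *
          s'.eval₂ (Polynomial.aeval Δ).toRingHom γ * h, ?_,
      r * r' + s * s' * Polynomial.C (Polynomial.X ^ N), r * s' + s * r', ?_⟩
    · exact add_mem (add_mem (mul_mem hx' hyA)
        (mul_mem (add_mem (hmem r) (mul_mem (hmem s) h2)) hy'))
        (mul_mem (mul_mem (hmem s) (hmem s')) hh)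
    · simp only [Polynomial.eval₂_add, Polynomial.eval₂_mul, hΔN]
      linear_combination s.eval₂ (Polynomial.aeval Δ).toRingHom γ *
        s'.eval₂ (Polynomial.aeval Δ).toRingHom γ * hβ

/-- The subalgebra `F[a0, Δ, β, γ]` is saturated with respect to `a0`. -/
lemma mem_adjoin_of_X_zero_mul_mem {k : Type*} [Field k] [Fintype k] (ι : k →+* F)
    (h2 : (2 : F) ≠ 0) (hodd : Odd (Fintype.card k)) {Δ β γ : MvPolynomial (Fin 3) F}
    (hΔ : Δ = X 1 ^ 2 - X 0 * X 2)
    (hβ : β = ∏ c : k, (X 1 + C (ι c) * X 0))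
    (hγ : γ = ∏ c : k, (X 2 + C (2 * ι c) * X 1 + C (ι c ^ 2) * X 0))
    {f : MvPolynomial (Fin 3) F} (hf : X 0 * f ∈ Algebra.adjoin F {X 0, Δ, β, γ}) :
    f ∈ Algebra.adjoin F {X 0, Δ, β, γ} := by
  obtain ⟨h, hh, hrel⟩ := exists_sq_eq_add_X_zero_mul ι hodd hΔ hβ hγ
  obtain ⟨f', hf', r, s, hfrs⟩ := exists_eq_X_zero_mul_add hh hrel hf
  have hX : reduceHom F (X 0) = 0 := by simp [reduceHom]
  obtain ⟨rfl, rfl⟩ := eq_zero_of_reduceHom_eq_zero ι h2 hodd hΔ hβ hγ (r := r) (s := s) (by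
    rw [← sub_eq_iff_eq_add'.2 hfrs, map_sub, map_mul, map_mul, hX, zero_mul, zero_mul, sub_zero])
  rw [Polynomial.eval₂_zero, zero_mul, add_zero, add_zero] at hfrs
  exact mul_left_cancel₀ (X_ne_zero 0) hfrs ▸ hf'

lemma σP_prod_one {k : Type*} [Field k] [Fintype k] (ι : k →+* F) (d : k) :
    σP F (ι d) (∏ c : k, (X 1 + C (ι c) * X 0)) = ∏ c : k, (X 1 + C (ι c) * X 0) := by
  rw [map_prod]
  refine Fintype.prod_equiv (Equiv.addLeft d) _ _ fun c => ?_
  simp only [map_add, map_mul, σP_X_zero, σP_X_one, algHom_C, Equiv.coe_addLeft,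
    MvPolynomial.algebraMap_eq]
  ring

lemma σP_prod_two {k : Type*} [Field k] [Fintype k] (ι : k →+* F) (d : k) :
    σP F (ι d) (∏ c : k, (X 2 + C (2 * ι c) * X 1 + C (ι c ^ 2) * X 0)) =
      ∏ c : k, (X 2 + C (2 * ι c) * X 1 + C (ι c ^ 2) * X 0) := by
  rw [map_prod]
  refine Fintype.prod_equiv (Equiv.addLeft d) _ _ fun c => ?_
  simp only [map_add, map_mul, map_pow, map_ofNat, σP_X_zero, σP_X_one, σP_X_two, algHom_C,
    Equiv.coe_addLeft, MvPolynomial.algebraMap_eq]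
  ring

end

/-- The ring of `P`-invariants is generated by `a0`, `Δ`, `β`, `γ₀`:
`F[V]^P = F[a0, Δ, β, γ₀]`. -/
theorem P_invariants_generated (F : Type*) [Field F] (p n q : ℕ) (hp : p.Prime) (hp2 : p ≠ 2)
    [CharP F p] (hn : n ≠ 0) (hq : q = p ^ n)
    (Fq : Type*) [Field Fq] [Fintype Fq] [Algebra Fq F] (hcard : Fintype.card Fq = q)
    (Δ β γ₀ : MvPolynomial (Fin 3) F)
    (hΔ : Δ = X 1 ^ 2 - X 0 * X 2)
    (hβ : β = ∏ c : Fq, (X 1 + C (algebraMap Fq F c) * X 0))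
    (hγ : γ₀ = ∏ c : Fq,
      (X 2 + C (2 * algebraMap Fq F c) * X 1 + C ((algebraMap Fq F c) ^ 2) * X 0)) :
    {f : MvPolynomial (Fin 3) F | ∀ c : Fq, σP F (algebraMap Fq F c) f = f} =
      ((Algebra.adjoin F {(X 0 : MvPolynomial (Fin 3) F), Δ, β, γ₀} :
        Subalgebra F (MvPolynomial (Fin 3) F)) : Set (MvPolynomial (Fin 3) F)) := by
  have h2 : (2 : F) ≠ 0 := Ring.two_ne_zero (by rwa [ringChar.eq F p])
  have hodd : Odd (Fintype.card Fq) := by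
    rw [hcard, hq]
    exact (hp.odd_of_ne_two hp2).pow
  ext f
  rw [Set.mem_ofPred_eq, SetLike.mem_coe]
  constructor
  · intro hf
    obtain ⟨m, hm⟩ := exists_pow_mul_mem_of_invariant (algebraMap Fq F) hf
      (Algebra.adjoin F {X 0, Δ, β, γ₀}) (Algebra.subset_adjoin (by simp))
      (Algebra.subset_adjoin (by simp [hΔ])) (Algebra.subset_adjoin (by simp [hβ]))
    induction m with
    | zero => simpa using hm
    | succ m ih =>
      rw [pow_succ', mul_assoc] at hm
      exact ih (mem_adjoin_of_X_zero_mul_mem (algebraMap Fq F) h2 hodd hΔ hβ hγ hm)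
  · intro hf c
    have hle : Algebra.adjoin F {X 0, Δ, β, γ₀} ≤
        AlgHom.equalizer (σP F (algebraMap Fq F c)) (AlgHom.id F _) := by
      refine Algebra.adjoin_le ?_
      rintro x (rfl | rfl | rfl | rfl)
      · exact σP_X_zero _
      · rw [hΔ]
        exact σP_disc _
      · rw [hβ]
        exact σP_prod_one (algebraMap Fq F) c
      · rw [hγ]
        exact σP_prod_two (algebraMap Fq F) c
    exact hle hf
end

section
/- The polynomial J = a0·γ_0 is SL_2(F_q)-invariant: σ_c(J) = J for all c ∈ F_q and τ(J) = J. -/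
open MvPolynomial
open scoped Classical

/-- The product over a finite field splits into the factor at `0` and a product over units. -/
lemma prod_eq_zero_mul_prod_units {K M : Type*} [Field K] [Fintype K] [CommMonoid M] (f : K → M) :
    ∏ c, f c = f 0 * ∏ u : Kˣ, f u := by
  rw [Fintype.prod_eq_mul_prod_subtype_ne f 0,
    Fintype.prod_equiv unitsEquivNeZero (fun u : Kˣ => f u) (fun c => f c) fun _ => rfl]

/-- The factors of `γ₀`: the `σ_c`-orbit of `a2`. -/
noncomputable def orbitFactor {F : Type*} [Field F] (c : F) : MvPolynomial (Fin 3) F :=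
  X 2 + C (2 * c) * X 1 + C (c ^ 2) * X 0

lemma σP_orbitFactor {F : Type*} [Field F] (c d : F) :
    σP F c (orbitFactor d) = orbitFactor (d + c) := by
  simp only [σP, orbitFactor, map_add, map_mul, map_pow, map_ofNat, aeval_X, aeval_C,
    algebraMap_eq, Matrix.cons_val]
  ring

lemma τA_orbitFactor {F : Type*} [Field F] {c : F} (hc : c ≠ 0) :
    τA F (orbitFactor c) = C (c ^ 2) * orbitFactor (-c⁻¹) := by
  have h : (C c * C c⁻¹ : MvPolynomial (Fin 3) F) = 1 := by
    rw [← C_mul, mul_inv_cancel₀ hc, C_1]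
  simp only [τA, orbitFactor, map_add, map_mul, map_pow, map_neg, map_ofNat, aeval_X, aeval_C,
    algebraMap_eq, Matrix.cons_val]
  linear_combination (2 * C c * X 1 - (C c * C c⁻¹ + 1) * X 0) * h

/-- The squares of the nonzero elements of a finite field multiply to `1`. -/
lemma prod_units_sq_eq_one (K : Type*) [Field K] [Fintype K] : ∏ u : Kˣ, (u : K) ^ 2 = 1 := by
  have h := congrArg (fun u : Kˣ => (u : K)) (FiniteField.prod_univ_units_id_eq_neg_one (K := K))
  simp only [Units.coe_prod, Units.val_neg, Units.val_one] at h
  rw [Finset.prod_pow, h, neg_one_sq]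

/-- `J = a0·γ₀` is `SL₂(F_q)`-invariant: it is fixed by every `σ_c` and by `τ`. -/
theorem J_invariant (F : Type*) [Field F] (p n q : ℕ) (hp : p.Prime) (hp2 : p ≠ 2)
    [CharP F p] (hn : n ≠ 0) (hq : q = p ^ n)
    (Fq : Type*) [Field Fq] [Fintype Fq] [Algebra Fq F] (hcard : Fintype.card Fq = q)
    (γ₀ J : MvPolynomial (Fin 3) F)
    (hγ : γ₀ = ∏ c : Fq,
      (X 2 + C (2 * algebraMap Fq F c) * X 1 + C ((algebraMap Fq F c) ^ 2) * X 0))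
    (hJ : J = X 0 * γ₀) :
    (∀ c : Fq, σP F (algebraMap Fq F c) J = J) ∧ τA F J = J := by
  subst hJ
  change γ₀ = ∏ c : Fq, orbitFactor (algebraMap Fq F c) at hγ
  subst hγ
  refine ⟨fun c => ?_, ?_⟩
  · have h0 : σP F (algebraMap Fq F c) (X 0) = X 0 := by simp [σP]
    rw [map_mul, h0, map_prod]
    congr 1
    simp only [σP_orbitFactor, ← map_add]
    exact Fintype.prod_equiv (Equiv.addRight c) _ _ fun _ => rfl
  · have h0 : τA F (X 0) = X 2 := by simp [τA]
    have h1 : orbitFactor (0 : F) = X 2 := by simp [orbitFactor]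
    have h2 : τA F (X 2) = X 0 := by simp [τA]
    have hτ (u : Fqˣ) : τA F (orbitFactor (algebraMap Fq F u)) =
        C (algebraMap Fq F ((u : Fq) ^ 2)) *
          orbitFactor (algebraMap Fq F ((-u⁻¹ : Fqˣ) : Fq)) := by
      rw [τA_orbitFactor (by simp)]
      simp
    have hprod : ∏ u : Fqˣ, orbitFactor (algebraMap Fq F ((-u⁻¹ : Fqˣ) : Fq)) =
        ∏ u : Fqˣ, orbitFactor (algebraMap Fq F u) :=
      Fintype.prod_equiv ((Equiv.inv Fqˣ).trans (Equiv.neg Fqˣ)) _ _ fun _ => rfl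
    rw [prod_eq_zero_mul_prod_units, map_zero, h1, map_mul, map_mul, h0, h2, map_prod]
    simp only [hτ]
    rw [Finset.prod_mul_distrib, hprod, ← map_prod, ← map_prod, prod_units_sq_eq_one, map_one,
      map_one]
    ring
end

section
/- The set {Δ, J, Γ} is a homogeneous system of parameters for F[V]^{SL_2(F_q)}: the only common zero of Δ, J, Γ over an algebraic closure of F is the origin of the three-dimensional affine space; equivalently, F[V] is a finitely generated module over the subalgebra F[Δ, J, Γ]. -/
open MvPolynomial
open scoped Classical

universe u v

/-- A homogeneous polynomial of degree `d` scales by `c ^ d` when its arguments scale by `c`. -/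
lemma MvPolynomial.IsHomogeneous.eval₂_mul_left {σ R S : Type*} [CommSemiring R] [CommSemiring S]
    {f : MvPolynomial σ R} {d : ℕ} (hf : f.IsHomogeneous d) (g : R →+* S) (c : S) (x : σ → S) :
    MvPolynomial.eval₂ g (fun i => c * x i) f = c ^ d * MvPolynomial.eval₂ g x f := by
  rw [eval₂_eq, eval₂_eq, Finset.mul_sum]
  refine Finset.sum_congr rfl fun m hm => ?_
  have hd : ∑ i ∈ m.support, m i = d := by
    simpa [Finsupp.weight_apply, Finsupp.sum] using hf (mem_support_iff.mp hm)
  simp_rw [mul_pow]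
  rw [Finset.prod_mul_distrib, Finset.prod_pow_eq_pow_sum, hd]
  ring

/-- If homogeneous polynomials of positive degree have only the trivial common zero over every
field extension, then the polynomial ring is a finite module over the subalgebra they generate. -/
theorem MvPolynomial.finite_adjoin_of_forall_eq_zero {σ : Type v} [Finite σ] {F : Type u} [Field F]
    (s : Set (MvPolynomial σ F)) (hs : ∀ f ∈ s, ∃ d ≠ 0, f.IsHomogeneous d)
    (h : ∀ (K : Type (max u v)) [Field K] [Algebra F K] (x : σ → K),
      (∀ f ∈ s, aeval x f = 0) → x = 0) :
    Module.Finite (Algebra.adjoin F s) (MvPolynomial σ F) := by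
  set A := Algebra.adjoin F s
  have hft : Algebra.FiniteType A (MvPolynomial σ F) :=
    Algebra.FiniteType.of_restrictScalars_finiteType F A _
  suffices hX : ∀ i, IsIntegral A (X i : MvPolynomial σ F) by
    have : Algebra.IsIntegral A (MvPolynomial σ F) := ⟨fun f => by
      induction f using MvPolynomial.induction_on with
      | C a => exact isIntegral_algebraMap (R := A) (x := algebraMap F A a)
      | add f g hf hg => exact hf.add hg
      | mul_X f i hf => exact hf.mul (hX i)⟩
    exact Algebra.IsIntegral.finite
  intro i
  let L := FractionRing (MvPolynomial σ F)
  let φ := algebraMap (MvPolynomial σ F) L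
  by_contra hi
  have hi' : φ (X i) ∉ (integralClosure A L).toSubring := fun hmem =>
    hi ((isIntegral_algebraMap_iff (IsFractionRing.injective (MvPolynomial σ F) L)).mp hmem)
  have : IsIntegrallyClosedIn (integralClosure A L).toSubring L :=
    inferInstanceAs (IsIntegrallyClosedIn (integralClosure A L) L)
  obtain ⟨V, hV, hiV⟩ := Subring.exists_le_valuationSubring_of_isIntegrallyClosedIn hi'
  have hAV : ∀ a ∈ A, φ a ∈ V := fun a ha =>
    hV (show IsIntegral A (φ a) from isIntegral_algebraMap (R := A) (x := (⟨a, ha⟩ : A)))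
  have : Nonempty σ := ⟨i⟩
  obtain ⟨j, hj⟩ := Finite.exists_max fun k => V.valuation (φ (X k))
  set t := φ (X j)
  have ht1 : 1 < V.valuation t := by
    rw [← V.valuation_le_one_iff, not_le] at hiV
    exact hiV.trans_le (hj i)
  have ht0 : t ≠ 0 := by
    rintro h0
    simp [h0] at ht1
  have hyV : ∀ k, t⁻¹ * φ (X k) ∈ V := fun k => by
    rw [← V.valuation_le_one_iff, map_mul, map_inv₀]
    exact inv_mul_le_one_of_le₀ (hj k) zero_le
  let y : σ → V := fun k => ⟨t⁻¹ * φ (X k), hyV k⟩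
  let e : F →+* V := (φ.comp C).codRestrict V fun a => hAV _ (A.algebraMap_mem a)
  let _ : Algebra F (IsLocalRing.ResidueField V) := ((IsLocalRing.residue V).comp e).toAlgebra
  have hy := h (IsLocalRing.ResidueField V) (fun k => IsLocalRing.residue V (y k)) fun f hf => by
    obtain ⟨d, hd, hfd⟩ := hs f hf
    have hres : aeval (fun k => IsLocalRing.residue V (y k)) f
        = IsLocalRing.residue V (eval₂ e y f) := by
      rw [hom_eval₂]
      rfl
    have hval : ((eval₂ e y f : V) : L) = t⁻¹ ^ d * φ f := by
      change V.subtype (eval₂ e y f) = _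
      rw [hom_eval₂]
      change eval₂ (φ.comp C) (fun k => t⁻¹ * φ (X k)) f = _
      rw [hfd.eval₂_mul_left]
      congr 1
      rw [← hom_eval₂, eval₂_eta]
    rw [hres, IsLocalRing.residue_eq_zero_iff, ValuationSubring.valuation_lt_one_iff, hval,
      map_mul, map_pow, map_inv₀]
    exact mul_lt_one_of_lt_of_le (pow_lt_one₀ zero_le (inv_lt_one_of_one_lt₀ ht1) hd)
      ((V.valuation_le_one_iff _).mpr (hAV f (Algebra.subset_adjoin hf)))
  have hyj : y j = 1 := Subtype.ext (inv_mul_cancel₀ ht0)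
  simpa [hyj] using congrFun hy j

/-- The common zeros of `Δ`, `J` and `Γ` over any field extension: only the origin. -/
lemma eq_zero_of_discriminant_of_orbit_products {k K : Type*} [Field k] [Fintype k] [Field K]
    (g : k →+* K) (x : Fin 3 → K) (hΔ : x 1 ^ 2 - x 0 * x 2 = 0)
    (hJ : x 0 * ∏ c : k, (x 2 + 2 * g c * x 1 + g c ^ 2 * x 0) = 0)
    (hΓ : ∏ b ∈ Finset.univ.filter (fun b : k => b ≠ 0 ∧ ¬ IsSquare b),
      ∏ c : k, (x 2 + 2 * g c * x 1 + (g c ^ 2 - g b) * x 0) = 0) : x = 0 := by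
  obtain ⟨b, hb, hΓ⟩ := Finset.prod_eq_zero_iff.mp hΓ
  obtain ⟨d, -, hd⟩ := Finset.prod_eq_zero_iff.mp hΓ
  have h0 : x 0 = 0 := by
    rcases mul_eq_zero.mp hJ with h0 | hJ
    · exact h0
    obtain ⟨c, -, hc⟩ := Finset.prod_eq_zero_iff.mp hJ
    have h1 : x 1 + g c * x 0 = 0 := by
      refine pow_eq_zero_iff two_ne_zero |>.mp ?_
      linear_combination hΔ + x 0 * hc
    have hbd : g ((c - d) ^ 2 - b) * x 0 = 0 := by
      simp only [map_sub, map_pow]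
      linear_combination hd - hc + 2 * (g c - g d) * h1
    refine (mul_eq_zero.mp hbd).resolve_left fun hb0 => (Finset.mem_filter.mp hb).2.2 ?_
    rw [map_eq_zero, sub_eq_zero] at hb0
    exact hb0 ▸ IsSquare.sq _
  have h1 : x 1 = 0 := by simpa [h0] using hΔ
  have h2 : x 2 = 0 := by simpa [h0, h1] using hd
  funext i
  fin_cases i <;> assumption

/-- `{Δ, J, Γ}` is a homogeneous system of parameters: the only common zero of `Δ`, `J`, `Γ`
over an algebraic closure of `F` is the origin, and `F[V]` is a finite module over
the subalgebra `F[Δ, J, Γ]`. -/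
theorem hsop_for_SL2 (F : Type*) [Field F] (p n q : ℕ) (hp : p.Prime) (hp2 : p ≠ 2)
    [CharP F p] (hn : n ≠ 0) (hq : q = p ^ n)
    (Fq : Type*) [Field Fq] [Fintype Fq] [Algebra Fq F] (hcard : Fintype.card Fq = q)
    (Δ γ₀ Γ J : MvPolynomial (Fin 3) F)
    (hΔ : Δ = X 1 ^ 2 - X 0 * X 2)
    (hγ : γ₀ = ∏ c : Fq,
      (X 2 + C (2 * algebraMap Fq F c) * X 1 + C ((algebraMap Fq F c) ^ 2) * X 0))
    (hΓ : Γ = ∏ k ∈ Finset.univ.filter (fun k : Fq => k ≠ 0 ∧ ¬ IsSquare k),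
      ∏ c : Fq, (X 2 + C (2 * algebraMap Fq F c) * X 1 +
        C ((algebraMap Fq F c) ^ 2 - algebraMap Fq F k) * X 0))
    (hJ : J = X 0 * γ₀) :
    (∀ x : Fin 3 → AlgebraicClosure F,
      aeval x Δ = 0 → aeval x J = 0 → aeval x Γ = 0 → x = 0) ∧
    Module.Finite (Algebra.adjoin F {Δ, J, Γ}) (MvPolynomial (Fin 3) F) := by
  have : CharP Fq p := ((algebraMap Fq F).charP_iff (algebraMap Fq F).injective p).mpr ‹_›
  have hlin : ∀ a b : F, (X 2 + C a * X 1 + C b * X 0 : MvPolynomial (Fin 3) F).IsHomogeneous 1 :=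
    fun a b => ((isHomogeneous_X F 2).add (isHomogeneous_C_mul_X a 1)).add
      (isHomogeneous_C_mul_X b 0)
  have hzero : ∀ (K : Type _) [Field K] [Algebra F K] (x : Fin 3 → K),
      aeval x Δ = 0 → aeval x J = 0 → aeval x Γ = 0 → x = 0 := by
    intro K _ _ x h₁ h₂ h₃
    have htwo : algebraMap F K 2 = 2 := map_ofNat _ 2
    subst hJ hγ hΓ hΔ
    refine eq_zero_of_discriminant_of_orbit_products ((algebraMap F K).comp (algebraMap Fq F)) x
      ?_ ?_ ?_
    · simpa using h₁
    · simpa [map_prod, htwo] using h₂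
    · simpa [map_prod, htwo] using h₃
  refine ⟨hzero _, finite_adjoin_of_forall_eq_zero _ ?_ fun K _ _ x hx =>
    hzero K x (hx _ (by simp)) (hx _ (by simp)) (hx _ (by simp))⟩
  rintro f (rfl | rfl | rfl)
  · refine ⟨2, two_ne_zero, hΔ ▸ ?_⟩
    exact (isHomogeneous_X_pow 1 2).sub ((isHomogeneous_X F 0).mul (isHomogeneous_X F 2))
  · refine ⟨_, ?_, hJ ▸ hγ ▸ (isHomogeneous_X F 0).mul
      (IsHomogeneous.prod _ _ (fun _ => 1) fun c _ => hlin _ _)⟩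
    omega
  · refine ⟨_, ?_, hΓ ▸ IsHomogeneous.prod _ _ _ fun b _ =>
      IsHomogeneous.prod _ _ (fun _ => 1) fun c _ => hlin _ _⟩
    obtain ⟨b, hb⟩ := FiniteField.exists_nonsquare (F := Fq) (by rwa [ringChar.eq Fq p])
    have hb0 : b ≠ 0 := by
      rintro rfl
      exact hb IsSquare.zero
    have hne : (Finset.univ.filter fun k : Fq => k ≠ 0 ∧ ¬ IsSquare k).Nonempty :=
      ⟨b, by simp [hb, hb0]⟩
    simpa using hne.card_pos.ne'
end

section
/- Every SL_2(F_q)-invariant polynomial f ∈ F[V] all of whose monomials have odd weight (i.e., each monomial a0^{e0} a1^{e1} a2^{e2} of f has e1 + 2e2 odd) is divisible by B in F[V]^{SL_2(F_q)}. -/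
open MvPolynomial
open scoped Classical

/-- A nonzero linear form over a field is irreducible. -/
theorem MvPolynomial.IsHomogeneous.irreducible_of_degree_one {ι F : Type*} [Field F]
    {ℓ : MvPolynomial ι F} (h : ℓ.IsHomogeneous 1) (h0 : ℓ ≠ 0) : Irreducible ℓ := by
  refine irreducible_of_totalDegree_eq_one (h.totalDegree h0) fun x hx => ?_
  rw [isUnit_iff_ne_zero]
  rintro rfl
  exact h0 (MvPolynomial.ext _ _ fun i => by simpa using hx i)

/-- The linear factor `a1 + c·a0` of `β`. -/
noncomputable def betaFactor {F : Type*} [Field F] (c : F) : MvPolynomial (Fin 3) F :=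
  X 1 + C c * X 0

/-- The linear factor `a2 + 2c·a1 + (c² - k)·a0` of `γ_k`. -/
noncomputable def gammaFactor {F : Type*} [Field F] (k c : F) : MvPolynomial (Fin 3) F :=
  X 2 + C (2 * c) * X 1 + C (c ^ 2 - k) * X 0

section Factors

variable {F : Type*} [Field F]

theorem irreducible_betaFactor (c : F) : Irreducible (betaFactor c) := by
  refine IsHomogeneous.irreducible_of_degree_one
    ((isHomogeneous_X _ _).add (isHomogeneous_C_mul_X _ _)) fun h => ?_
  simpa [betaFactor] using congrArg (eval ![0, 1, 0]) h

theorem irreducible_gammaFactor (k c : F) : Irreducible (gammaFactor k c) := by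
  refine IsHomogeneous.irreducible_of_degree_one
    (((isHomogeneous_X _ _).add (isHomogeneous_C_mul_X _ _)).add (isHomogeneous_C_mul_X _ _))
    fun h => ?_
  simpa [gammaFactor] using congrArg (eval ![0, 0, 1]) h

theorem isRelPrime_betaFactor {c d : F} (h : c ≠ d) :
    IsRelPrime (betaFactor c) (betaFactor d) := by
  rw [(irreducible_betaFactor c).isRelPrime_iff_not_dvd]
  intro hdvd
  have := map_dvd (eval ![1, -c, 0]) hdvd
  simp [betaFactor] at this
  exact h (by linear_combination -this)

theorem isRelPrime_betaFactor_gammaFactor (c k d : F) :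
    IsRelPrime (betaFactor c) (gammaFactor k d) := by
  rw [(irreducible_betaFactor c).isRelPrime_iff_not_dvd]
  intro hdvd
  simpa [betaFactor, gammaFactor] using map_dvd (eval ![0, 0, 1]) hdvd

theorem isRelPrime_gammaFactor (h2 : (2 : F) ≠ 0) {k c l d : F} (h : ¬(k = l ∧ c = d)) :
    IsRelPrime (gammaFactor k c) (gammaFactor l d) := by
  rw [(irreducible_gammaFactor k c).isRelPrime_iff_not_dvd]
  intro hdvd
  have h0 := map_dvd (eval ![1, 0, k - c ^ 2]) hdvd
  have h1 := map_dvd (eval ![0, 1, -(2 * c)]) hdvd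
  simp [gammaFactor] at h0 h1
  have hcd : c = d := mul_left_cancel₀ h2 (by linear_combination -h1)
  subst hcd
  exact h ⟨by linear_combination h0, rfl⟩

theorem σP_betaFactor (d c : F) : σP F d (betaFactor c) = betaFactor (c + d) := by
  simp [σP, betaFactor]
  ring

theorem σP_gammaFactor (d k c : F) : σP F d (gammaFactor k c) = gammaFactor k (c + d) := by
  have hC : (C 2 : MvPolynomial (Fin 3) F) = 2 := map_ofNat C 2
  simp [σP, gammaFactor]
  rw [hC]
  ring

theorem τA_τA (f : MvPolynomial (Fin 3) F) : τA F (τA F f) = f := by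
  have : (τA F).comp (τA F) = AlgHom.id F _ := by
    ext i
    fin_cases i <;> simp [τA]
  exact DFunLike.congr_fun this f

/-- The relation `(στ)³ = 1` between `σ = σ_1` and `τ`. -/
theorem σP_τA_braid (f : MvPolynomial (Fin 3) F) :
    σP F 1 (τA F (σP F 1 (τA F (σP F 1 f)))) = τA F f := by
  have : (σP F 1).comp ((τA F).comp ((σP F 1).comp ((τA F).comp (σP F 1)))) = τA F := by
    have hC : (C 2 : MvPolynomial (Fin 3) F) = 2 := map_ofNat C 2
    apply MvPolynomial.algHom_ext
    intro i
    fin_cases i <;> simp [τA, σP] <;> rw [hC] <;> ring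
  exact DFunLike.congr_fun this f

theorem betaFactor_eq_τA {c d : F} (h : -(2 * d) * c = 1) :
    betaFactor c = τA F (C c * gammaFactor (d ^ 2) d) := by
  have h' := congrArg (C (σ := Fin 3)) h
  simp [τA, betaFactor, gammaFactor] at h' ⊢
  linear_combination (-X 1) * h'

theorem gammaFactor_sq_eq_τA {c d : F} (h : -(2 * c) * d = 1) :
    gammaFactor (c ^ 2) c = τA F (C (-(2 * c)) * betaFactor d) := by
  have h' := congrArg (C (σ := Fin 3)) h
  simp [τA, betaFactor, gammaFactor] at h' ⊢
  linear_combination (-X 2) * h'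

theorem gammaFactor_eq_τA {k c u : F} (h : u * (c ^ 2 - k) = 1) :
    gammaFactor k c = τA F (C (c ^ 2 - k) * gammaFactor (k * u ^ 2) (-(c * u))) := by
  have h1 : (c ^ 2 - k) * ((-(c * u)) ^ 2 - k * u ^ 2) = 1 := by
    linear_combination (u * (c ^ 2 - k) + 1) * h
  have h2 : (c ^ 2 - k) * (2 * (-(c * u))) = - (2 * c) := by
    linear_combination (-2 * c) * h
  have h1' := congrArg (C (σ := Fin 3)) h1
  have h2' := congrArg (C (σ := Fin 3)) h2
  simp [τA, gammaFactor] at h1' h2' ⊢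
  linear_combination (-X 2) * h1' - X 1 * h2'

theorem dvd_τA_of_eq {ℓ ℓ' f : MvPolynomial (Fin 3) F} {u : F} (hu : u ≠ 0)
    (hℓ : ℓ = τA F (C u * ℓ')) (h : ℓ' ∣ f) : ℓ ∣ τA F f := by
  rw [hℓ]
  refine map_dvd _ ?_
  rwa [((isUnit_iff_ne_zero.mpr hu).map C).mul_left_dvd]

theorem X_one_dvd_of_odd_weight {f : MvPolynomial (Fin 3) F}
    (hodd : ∀ m ∈ f.support, Odd (m 1 + 2 * m 2)) : X 1 ∣ f := by
  rw [f.as_sum]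
  refine Finset.dvd_sum fun m hm => ?_
  rw [X_dvd_monomial]
  right
  intro h
  have := hodd m hm
  rw [h, zero_add] at this
  exact Nat.not_odd_iff_even.mpr (even_two_mul _) this

end Factors

section FiniteField

variable {F : Type*} [Field F] {Fq : Type*} [Field Fq] [Algebra Fq F]

variable (Fq) in
/-- Divisibility by all linear factors of `B`. -/
def AllFactorsDvd (f : MvPolynomial (Fin 3) F) : Prop :=
  (∀ c : Fq, betaFactor (algebraMap Fq F c) ∣ f) ∧
    ∀ k c : Fq, k ≠ 0 → IsSquare k → gammaFactor (algebraMap Fq F k) (algebraMap Fq F c) ∣ f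

theorem AllFactorsDvd.τA {f : MvPolynomial (Fin 3) F} (h2 : (2 : Fq) ≠ 0)
    (h : AllFactorsDvd Fq f) : AllFactorsDvd Fq (τA F f) := by
  have hne : ∀ {x : Fq}, x ≠ 0 → algebraMap Fq F x ≠ 0 := fun hx => by simpa using hx
  refine ⟨fun c => ?_, fun k c hk0 hk => ?_⟩
  · rcases eq_or_ne c 0 with rfl | hc
    · refine dvd_τA_of_eq (u := -1) (by simp) ?_ (h.1 0)
      simp [_root_.τA, betaFactor]
    · have hd : -(2 * (-(2 * c)⁻¹)) * c = 1 := by field_simp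
      have := h.2 ((-(2 * c)⁻¹) ^ 2) (-(2 * c)⁻¹)
        (pow_ne_zero _ (neg_ne_zero.mpr (inv_ne_zero (mul_ne_zero h2 hc)))) (IsSquare.sq _)
      rw [map_pow] at this
      refine dvd_τA_of_eq (hne hc) (betaFactor_eq_τA ?_) this
      simpa only [map_mul, map_neg, map_ofNat, map_one] using congrArg (algebraMap Fq F) hd
  · rcases eq_or_ne (c ^ 2 - k) 0 with hck | hck
    · obtain rfl : k = c ^ 2 := by linear_combination -hck
      have hc : c ≠ 0 := by rintro rfl; simp at hk0
      have hd : -(2 * c) * (-(2 * c)⁻¹) = 1 := by field_simp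
      rw [map_pow]
      refine dvd_τA_of_eq ?_ (gammaFactor_sq_eq_τA (d := algebraMap Fq F (-(2 * c)⁻¹)) ?_) (h.1 _)
      · have := hne (neg_ne_zero.mpr (mul_ne_zero h2 hc))
        simpa only [map_mul, map_neg, map_ofNat] using this
      · simpa only [map_mul, map_neg, map_ofNat, map_one] using congrArg (algebraMap Fq F) hd
    · have := h.2 (k * ((c ^ 2 - k)⁻¹) ^ 2) (-(c * (c ^ 2 - k)⁻¹))
        (mul_ne_zero hk0 (pow_ne_zero _ (inv_ne_zero hck))) (hk.mul (IsSquare.sq _))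
      rw [map_mul, map_pow, map_neg, map_mul] at this
      refine dvd_τA_of_eq ?_ (gammaFactor_eq_τA ?_) this
      · simpa only [map_sub, map_pow] using hne hck
      · simpa only [map_sub, map_pow, map_mul, map_one] using
          congrArg (algebraMap Fq F) (inv_mul_cancel₀ hck)

theorem allFactorsDvd_of_invariant {f : MvPolynomial (Fin 3) F} (h2 : (2 : Fq) ≠ 0)
    (hfP : ∀ c : Fq, σP F (algebraMap Fq F c) f = f) (hfτ : τA F f = f) (hX : X 1 ∣ f) :
    AllFactorsDvd Fq f := by
  have hβ : ∀ c : Fq, betaFactor (algebraMap Fq F c) ∣ f := fun c => by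
    have h0 : betaFactor (0 : F) ∣ f := by simpa [betaFactor] using hX
    have := map_dvd (σP F (algebraMap Fq F c)) h0
    rwa [σP_betaFactor, zero_add, hfP] at this
  refine ⟨hβ, fun k c hk0 hk => ?_⟩
  obtain ⟨s, rfl⟩ := hk
  have hs : s ≠ 0 := by rintro rfl; simp at hk0
  have hd : -(2 * s) * (-(2 * s)⁻¹) = 1 := by field_simp
  have hγ : gammaFactor (algebraMap Fq F s ^ 2) (algebraMap Fq F s) ∣ τA F f := by
    refine dvd_τA_of_eq ?_ (gammaFactor_sq_eq_τA (d := algebraMap Fq F (-(2 * s)⁻¹)) ?_) (hβ _)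
    · have : algebraMap Fq F (-(2 * s)) ≠ 0 := by
        simpa using mul_ne_zero h2 hs
      simpa only [map_mul, map_neg, map_ofNat] using this
    · simpa only [map_mul, map_neg, map_ofNat, map_one] using congrArg (algebraMap Fq F) hd
  have := map_dvd (σP F (algebraMap Fq F (c - s))) hγ
  rwa [hfτ, hfP, σP_gammaFactor, map_sub, add_sub_cancel, sq, ← map_mul] at this

variable [Fintype Fq]

variable (F Fq) in
/-- The product `B` of all the linear factors. -/
noncomputable def factorProduct : MvPolynomial (Fin 3) F :=
  (∏ c : Fq, betaFactor (algebraMap Fq F c)) *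
    ∏ k ∈ Finset.univ.filter (fun k : Fq => k ≠ 0 ∧ IsSquare k),
      ∏ c : Fq, gammaFactor (algebraMap Fq F k) (algebraMap Fq F c)

theorem factorProduct_ne_zero : factorProduct F Fq ≠ 0 :=
  mul_ne_zero (Finset.prod_ne_zero_iff.mpr fun _ _ => (irreducible_betaFactor _).ne_zero)
    (Finset.prod_ne_zero_iff.mpr fun _ _ => Finset.prod_ne_zero_iff.mpr fun _ _ =>
      (irreducible_gammaFactor _ _).ne_zero)

theorem allFactorsDvd_factorProduct : AllFactorsDvd Fq (factorProduct F Fq) := by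
  refine ⟨fun c => (Finset.dvd_prod_of_mem _ (Finset.mem_univ c)).mul_right _,
    fun k c hk0 hk => Dvd.dvd.mul_left ?_ _⟩
  exact (Finset.dvd_prod_of_mem (fun c : Fq => gammaFactor (algebraMap Fq F k)
    (algebraMap Fq F c)) (Finset.mem_univ c)).trans
      (Finset.dvd_prod_of_mem (fun k : Fq => ∏ c : Fq, gammaFactor (algebraMap Fq F k)
        (algebraMap Fq F c)) (by simp [hk0, hk]))

theorem AllFactorsDvd.factorProduct_dvd {f : MvPolynomial (Fin 3) F} (h2 : (2 : Fq) ≠ 0)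
    (h : AllFactorsDvd Fq f) : factorProduct F Fq ∣ f := by
  have hinj := (algebraMap Fq F).injective
  have h2F : (2 : F) ≠ 0 := by
    have : algebraMap Fq F 2 ≠ 0 := by rwa [Ne, map_eq_zero]
    rwa [map_ofNat] at this
  refine IsRelPrime.mul_dvd ?_ ?_ ?_
  · exact IsRelPrime.prod_left fun c _ => IsRelPrime.prod_right fun k _ =>
      IsRelPrime.prod_right fun d _ => isRelPrime_betaFactor_gammaFactor _ _ _
  · exact Finset.prod_dvd_of_isRelPrime
      (fun c _ d _ hcd => isRelPrime_betaFactor (hinj.ne hcd)) fun c _ => h.1 c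
  · refine Finset.prod_dvd_of_isRelPrime (fun k _ l _ hkl => ?_) fun k hk => ?_
    · exact IsRelPrime.prod_left fun c _ => IsRelPrime.prod_right fun d _ =>
        isRelPrime_gammaFactor h2F fun hh => hkl (hinj hh.1)
    · rw [Finset.mem_filter] at hk
      exact Finset.prod_dvd_of_isRelPrime
        (fun c _ d _ hcd => isRelPrime_gammaFactor h2F fun hh => hcd (hinj hh.2))
        fun c _ => h.2 k c hk.2.1 hk.2.2

theorem σP_factorProduct (d : Fq) :
    σP F (algebraMap Fq F d) (factorProduct F Fq) = factorProduct F Fq := by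
  simp only [factorProduct, map_mul, map_prod, σP_betaFactor, σP_gammaFactor, ← map_add]
  refine congrArg₂ (· * ·) ?_ ?_
  · exact Fintype.prod_equiv (Equiv.addRight d) _ _ fun _ => rfl
  · exact Finset.prod_congr rfl fun k _ =>
      Fintype.prod_equiv (Equiv.addRight d) _ _ fun _ => rfl

theorem τA_factorProduct (h2 : (2 : Fq) ≠ 0) : τA F (factorProduct F Fq) = factorProduct F Fq := by
  set P := factorProduct F Fq
  obtain ⟨u, hu⟩ : P ∣ τA F P := (allFactorsDvd_factorProduct.τA h2).factorProduct_dvd h2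
  have hP0 : P ≠ 0 := factorProduct_ne_zero
  have hunit : IsUnit u := by
    have h := τA_τA P
    rw [hu, map_mul, hu, mul_assoc] at h
    exact IsUnit.of_mul_eq_one _ (mul_left_cancel₀ hP0 (h.trans (mul_one P).symm))
  obtain ⟨r, hr, rfl⟩ := MvPolynomial.isUnit_iff_eq_C_of_isReduced.mp hunit
  have hσ : σP F 1 P = P := by simpa using σP_factorProduct (F := F) (1 : Fq)
  have hC (φ : MvPolynomial (Fin 3) F →ₐ[F] MvPolynomial (Fin 3) F) : φ (C r) = C r :=
    φ.commutes r
  have h := σP_τA_braid P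
  simp only [hσ, hu, map_mul, hC] at h
  have hr1 : (C r : MvPolynomial (Fin 3) F) = 1 := by
    rw [mul_assoc] at h
    exact hunit.mul_left_cancel ((mul_left_cancel₀ hP0 h).trans (mul_one _).symm)
  rw [hu, hr1, mul_one]

end FiniteField

/-- Every `SL₂(F_q)`-invariant polynomial all of whose monomials have odd weight
(the weight of `a0^{e0} a1^{e1} a2^{e2}` is `e1 + 2·e2`) is divisible by `B`
within the ring of `SL₂(F_q)`-invariants. -/
theorem odd_weight_invariant_divisible_by_B (F : Type*) [Field F] (p n q : ℕ) (hp : p.Prime)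
    (hp2 : p ≠ 2) [CharP F p] (hn : n ≠ 0) (hq : q = p ^ n)
    (Fq : Type*) [Field Fq] [Fintype Fq] [Algebra Fq F] (hcard : Fintype.card Fq = q)
    (β B : MvPolynomial (Fin 3) F)
    (hβ : β = ∏ c : Fq, (X 1 + C (algebraMap Fq F c) * X 0))
    (hB : B = β * ∏ k ∈ Finset.univ.filter (fun k : Fq => k ≠ 0 ∧ IsSquare k),
      ∏ c : Fq, (X 2 + C (2 * algebraMap Fq F c) * X 1 +
        C ((algebraMap Fq F c) ^ 2 - algebraMap Fq F k) * X 0))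
    (f : MvPolynomial (Fin 3) F)
    (hfP : ∀ c : Fq, σP F (algebraMap Fq F c) f = f)
    (hfτ : τA F f = f)
    (hodd : ∀ m ∈ f.support, Odd (m 1 + 2 * m 2)) :
    ∃ g : MvPolynomial (Fin 3) F,
      (∀ c : Fq, σP F (algebraMap Fq F c) g = g) ∧ τA F g = g ∧ f = B * g := by
  have h2 : (2 : Fq) ≠ 0 := by
    have : CharP Fq p := (algebraMap Fq F).charP (algebraMap Fq F).injective p
    exact Ring.two_ne_zero (by rwa [ringChar.eq Fq p])
  obtain rfl : B = factorProduct F Fq := by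
    rw [hB, hβ]
    rfl
  obtain ⟨g, rfl⟩ := (allFactorsDvd_of_invariant h2 hfP hfτ
    (X_one_dvd_of_odd_weight hodd)).factorProduct_dvd h2
  refine ⟨g, fun c => ?_, ?_, rfl⟩
  · have h := hfP c
    rw [map_mul, σP_factorProduct] at h
    exact mul_left_cancel₀ factorProduct_ne_zero h
  · rw [map_mul, τA_factorProduct h2] at hfτ
    exact mul_left_cancel₀ factorProduct_ne_zero hfτ
end
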